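/- Let G = (V,E) be a network with source s and sink t such that G is connected as a graph, let n ≥ 1, and let α be a labeling of G attaining the minimum of H_G^{(n)}. Then for every vertex x ∈ V, the permutation α(x) lies on a geodesic between id and γ_n, i.e. |α(x)| + |α(x)⁻¹ γ_n| = n − 1, where |σ| := n − c(σ) is the Cayley length. -/

import Mathlib

/-!
Write `u x = |α x|` and `v x = (n - 1) - |(α x)⁻¹ γ|`. Both are `1`-Lipschitz along edges for the
Cayley distance, both vanish at `s` and both equal `n - 1` at `t`; the claim is that `u = v`.

Put `w = u + v`, which runs from `0` at `s` to `2 (n - 1)` at `t`. For each integer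
`0 ≤ k < 2 (n - 1)` the cut labeling `β_k`, equal to `1` where `w ≤ k` and to `γ` elsewhere, is
admissible, so `H(α) ≤ H(β_k)`. An edge `{x, y}` is cut by at most `|w x - w y|` of the `β_k`, and
contributes `n - 1` whenever it is cut. Summing over `k`,
`2 (n - 1) H(α) ≤ ∑ₖ H(β_k) ≤ (n - 1) ∑ |w x - w y| ≤ 2 (n - 1) H(α)`,
so `|w x - w y| = 2 d(α x, α y)` on every edge. As `|u x - u y|` and `|v x - v y|` are at most
`d(α x, α y)`, this forces `u x - u y = v x - v y`. Hence `u - v` is constant along edges, and it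
vanishes at `s`; connectedness finishes the proof.

The triangle inequality for the Cayley distance comes from linear algebra: `c(σ)` is the dimension
of the space of `σ`-invariant functions `Fin n → ℚ` (`finrank_invariants`), and functions invariant
under `σ` and `τ` are invariant under `σ τ`.
-/

/-- The number of cycles of a permutation of `Fin n`, counting fixed points as cycles. -/
def cycleCount {n : ℕ} (σ : Equiv.Perm (Fin n)) : ℕ :=
  σ.cycleType.card + (n - σ.support.card)

/-- The Cayley length `|σ| = n - c(σ)` of a permutation of `Fin n`. -/
def cayleyLength {n : ℕ} (σ : Equiv.Perm (Fin n)) : ℕ := n - cycleCount σ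

/-- The Cayley distance `d(σ, τ) = n - c(σ⁻¹ τ)` on `S_n`. -/
def cayleyDist {n : ℕ} (σ τ : Equiv.Perm (Fin n)) : ℕ := cayleyLength (σ⁻¹ * τ)

lemma cayleyDist_comm {n : ℕ} (σ τ : Equiv.Perm (Fin n)) :
    cayleyDist σ τ = cayleyDist τ σ := by
  unfold cayleyDist cayleyLength cycleCount
  rw [show τ⁻¹ * σ = (σ⁻¹ * τ)⁻¹ by group]
  rw [Equiv.Perm.cycleType_inv, Equiv.Perm.support_inv]

/-- The contribution `d(α x, α y)` of an (undirected) edge `{x, y}` to the Hamiltonian. -/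
def edgeTerm {V : Type*} {n : ℕ} (α : V → Equiv.Perm (Fin n)) : Sym2 V → ℕ :=
  Sym2.lift ⟨fun x y => cayleyDist (α x) (α y), fun _ _ => cayleyDist_comm _ _⟩

/-- The Hamiltonian `H_G^{(n)}(α) = Σ_{{x,y} ∈ E} d(α x, α y)` of a labeling of the
vertices of a graph by permutations. -/
noncomputable def hamiltonian {V : Type*} (G : SimpleGraph V) {n : ℕ}
    (α : V → Equiv.Perm (Fin n)) : ℕ :=
  ∑ᶠ e ∈ G.edgeSet, edgeTerm α e

/-- `maxflow G s t` is the maximum cardinality of a collection of pairwise edge-disjoint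
paths from `s` to `t` in `G`. -/
noncomputable def maxflow {V : Type*} (G : SimpleGraph V) (s t : V) : ℕ :=
  sSup {k | ∃ π : Fin k → G.Walk s t, (∀ i, (π i).IsPath) ∧
    ∀ i j, i ≠ j → List.Disjoint (π i).edges (π j).edges}

/-- The space of rational functions on `Fin n` that are invariant under `σ`. -/
def invariants {n : ℕ} (σ : Equiv.Perm (Fin n)) : Submodule ℚ (Fin n → ℚ) where
  carrier := {f | ∀ x, f (σ x) = f x}
  add_mem' := fun hf hg x => by simp [hf x, hg x]
  zero_mem' := fun x => rfl
  smul_mem' := fun c f hf x => by simp [hf x]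

lemma invariants_apply_of_sameCycle {n : ℕ} {σ : Equiv.Perm (Fin n)} {f : Fin n → ℚ}
    (hf : f ∈ invariants σ) {x y : Fin n} (h : σ.SameCycle x y) : f x = f y := by
  obtain ⟨i, rfl⟩ := h.exists_nat_pow_eq
  induction i with
  | zero => simp
  | succ i ih =>
    rw [pow_succ', Equiv.Perm.mul_apply, hf]
    exact ih ⟨i, by simp⟩

/-- The cycle of `σ` through a point: a nontrivial cycle factor, or a fixed point. -/
def cycleClass {n : ℕ} (σ : Equiv.Perm (Fin n)) (x : Fin n) :
    σ.cycleFactorsFinset ⊕ {x : Fin n // σ x = x} :=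
  if h : σ x = x then Sum.inr ⟨x, h⟩
  else Sum.inl ⟨σ.cycleOf x,
    Equiv.Perm.cycleOf_mem_cycleFactorsFinset_iff.2 (Equiv.Perm.mem_support.2 h)⟩

lemma cycleClass_surjective {n : ℕ} (σ : Equiv.Perm (Fin n)) :
    Function.Surjective (cycleClass σ) := by
  rintro (⟨c, hc⟩ | ⟨x, hx⟩)
  · obtain ⟨a, ha⟩ := (Equiv.Perm.mem_cycleFactorsFinset_iff.1 hc).1.nonempty_support
    have haσ : σ a ≠ a :=
      Equiv.Perm.mem_support.1 (Equiv.Perm.mem_cycleFactorsFinset_support_le hc ha)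
    refine ⟨a, ?_⟩
    simp only [cycleClass, haσ, dite_false]
    exact congrArg Sum.inl (Subtype.ext (Equiv.Perm.cycle_is_cycleOf ha hc).symm)
  · exact ⟨x, by simp [cycleClass, hx]⟩

lemma cycleClass_apply {n : ℕ} (σ : Equiv.Perm (Fin n)) (x : Fin n) :
    cycleClass σ (σ x) = cycleClass σ x := by
  by_cases h : σ x = x
  · rw [h]
  · simp [cycleClass, h]

lemma sameCycle_of_cycleClass_eq {n : ℕ} {σ : Equiv.Perm (Fin n)} {x y : Fin n}
    (h : cycleClass σ x = cycleClass σ y) : σ.SameCycle x y := by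
  by_cases hx : σ x = x <;> by_cases hy : σ y = y <;> simp [cycleClass, hx, hy] at h
  · rw [h]
  · exact (Equiv.Perm.sameCycle_iff_cycleOf_eq_of_mem_support
      (Equiv.Perm.mem_support.2 hx) (Equiv.Perm.mem_support.2 hy)).2 h

/-- Invariant functions are exactly the functions that factor through `cycleClass σ`. -/
lemma range_funLeft_cycleClass {n : ℕ} (σ : Equiv.Perm (Fin n)) :
    LinearMap.range (LinearMap.funLeft ℚ ℚ (cycleClass σ)) = invariants σ := by
  ext f
  constructor
  · rintro ⟨g, rfl⟩ x
    simp [LinearMap.funLeft_apply, cycleClass_apply]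
  · intro hf
    have hfac : Function.FactorsThrough f (cycleClass σ) := fun x y h =>
      invariants_apply_of_sameCycle hf (sameCycle_of_cycleClass_eq h)
    refine ⟨Function.extend (cycleClass σ) f 0, ?_⟩
    ext x
    simp [LinearMap.funLeft_apply, hfac.extend_apply]

lemma finrank_invariants {n : ℕ} (σ : Equiv.Perm (Fin n)) :
    Module.finrank ℚ (invariants σ) = cycleCount σ := by
  rw [← range_funLeft_cycleClass, LinearMap.finrank_range_of_inj
    (LinearMap.funLeft_injective_of_surjective ℚ ℚ _ (cycleClass_surjective σ)),
    Module.finrank_fintype_fun_eq_card, Fintype.card_sum, cycleCount]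
  congr 1
  · simp [Equiv.Perm.cycleType_def]
  · have := σ.card_fixedPoints
    rw [Equiv.Perm.sum_cycleType, Fintype.card_fin] at this
    rw [← this]
    exact Fintype.card_congr (Equiv.refl _)

lemma cycleCount_le {n : ℕ} (σ : Equiv.Perm (Fin n)) : cycleCount σ ≤ n := by
  rw [← finrank_invariants]
  simpa using Submodule.finrank_le (invariants σ)

/-- Grassmann's dimension formula gives `c(σ) + c(τ) ≤ n + c(σ τ)`. -/
lemma cayleyLength_mul_le {n : ℕ} (σ τ : Equiv.Perm (Fin n)) :
    cayleyLength (σ * τ) ≤ cayleyLength σ + cayleyLength τ := by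
  have h1 := Submodule.finrank_sup_add_finrank_inf_eq (invariants σ) (invariants τ)
  have h2 : Module.finrank ℚ ↥(invariants σ ⊔ invariants τ) ≤ n := by
    simpa using Submodule.finrank_le (invariants σ ⊔ invariants τ)
  have h3 : Module.finrank ℚ ↥(invariants σ ⊓ invariants τ) ≤
      Module.finrank ℚ (invariants (σ * τ)) := by
    refine Submodule.finrank_mono fun f hf x => ?_
    rw [Equiv.Perm.mul_apply, hf.1, hf.2]
  simp only [finrank_invariants] at h1 h3
  have := cycleCount_le σ
  have := cycleCount_le τ
  unfold cayleyLength
  omega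

lemma cayleyLength_one {n : ℕ} : cayleyLength (1 : Equiv.Perm (Fin n)) = 0 := by
  simp [cayleyLength, cycleCount]

lemma cayleyDist_self {n : ℕ} (σ : Equiv.Perm (Fin n)) : cayleyDist σ σ = 0 := by
  simp [cayleyDist, cayleyLength_one]

lemma cayleyDist_triangle {n : ℕ} (σ τ ρ : Equiv.Perm (Fin n)) :
    cayleyDist σ ρ ≤ cayleyDist σ τ + cayleyDist τ ρ := by
  have := cayleyLength_mul_le (σ⁻¹ * τ) (τ⁻¹ * ρ)
  rwa [show σ⁻¹ * τ * (τ⁻¹ * ρ) = σ⁻¹ * ρ by group] at this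

/-- The labeling by `1` on the sublevel set `{w ≤ k}` and by `γ` off it. -/
noncomputable def cutLabel {V : Type*} {n : ℕ} (γ : Equiv.Perm (Fin n)) (w : V → ℤ) (k : ℤ)
    (x : V) : Equiv.Perm (Fin n) :=
  if w x ≤ k then 1 else γ

/-- A pair `{x, y}` is separated only by the levels `k` with
`min (w x) (w y) ≤ k < max (w x) (w y)`. -/
lemma sum_cayleyDist_cutLabel_le {V : Type*} {n : ℕ} (γ : Equiv.Perm (Fin n)) (w : V → ℤ)
    (s : Finset ℤ) (x y : V) :
    ∑ k ∈ s, (cayleyDist (cutLabel γ w k x) (cutLabel γ w k y) : ℤ) ≤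
      cayleyLength γ * |w x - w y| := by
  have hγ : cayleyDist 1 γ = cayleyLength γ := by simp [cayleyDist]
  have key : ∀ k, (cayleyDist (cutLabel γ w k x) (cutLabel γ w k y) : ℤ) =
      if k ∈ Finset.Ico (min (w x) (w y)) (max (w x) (w y)) then (cayleyLength γ : ℤ) else 0 := by
    intro k
    simp only [Finset.mem_Ico, cutLabel]
    by_cases hx : w x ≤ k <;> by_cases hy : w y ≤ k
    · rw [if_pos hx, if_pos hy, if_neg (by omega), cayleyDist_self]; rfl
    · rw [if_pos hx, if_neg hy, if_pos (by omega), hγ]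
    · rw [if_neg hx, if_pos hy, if_pos (by omega), cayleyDist_comm, hγ]
    · rw [if_neg hx, if_neg hy, if_neg (by omega), cayleyDist_self]; rfl
  rw [Finset.sum_congr rfl fun k _ => key k, ← Finset.sum_filter, Finset.sum_const, nsmul_eq_mul,
    mul_comm]
  refine mul_le_mul_of_nonneg_left ?_ (Int.natCast_nonneg _)
  have hcard : (s.filter (· ∈ Finset.Ico (min (w x) (w y)) (max (w x) (w y)))).card ≤
      (Finset.Ico (min (w x) (w y)) (max (w x) (w y))).card :=
    Finset.card_le_card fun k hk => (Finset.mem_filter.1 hk).2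
  rw [Int.card_Ico] at hcard
  rw [abs_eq_max_neg]
  omega

lemma hamiltonian_eq_sum {V : Type*} [Fintype V] (G : SimpleGraph V) {n : ℕ}
    (α : V → Equiv.Perm (Fin n)) :
    hamiltonian G α = ∑ e ∈ G.edgeSet.toFinite.toFinset, edgeTerm α e :=
  finsum_mem_eq_finite_toFinset_sum _ _

/-- If a labeling of a connected network attains the minimum of the Hamiltonian `H_G^{(n)}`,
then every vertex label lies on a geodesic between `id` and the full cycle `γ`. -/
theorem minimizer_labels_on_geodesic {V : Type*} [Fintype V] (G : SimpleGraph V)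
    (hconn : G.Connected) (s t : V) (hst : s ≠ t) (n : ℕ) (hn : 1 ≤ n)
    (γ : Equiv.Perm (Fin n)) (hγ : cycleCount γ = 1)
    (α : V → Equiv.Perm (Fin n)) (hαs : α s = 1) (hαt : α t = γ)
    (hmin : ∀ β : V → Equiv.Perm (Fin n), β s = 1 → β t = γ →
      hamiltonian G α ≤ hamiltonian G β) :
    ∀ x : V, cayleyLength (α x) + cayleyLength ((α x)⁻¹ * γ) = n - 1 := by
  have hlen : cayleyLength γ = n - 1 := by rw [cayleyLength, hγ]
  rcases hn.eq_or_lt with rfl | hn2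
  · intro x
    rw [Subsingleton.elim (α x) 1, Subsingleton.elim γ 1]
    simp [cayleyLength_one]
  have hone : ∀ σ : Equiv.Perm (Fin n), cayleyDist 1 σ = cayleyLength σ := fun σ => by
    simp [cayleyDist]
  set w : V → ℤ := fun x => cayleyDist 1 (α x) + ((n - 1 : ℕ) - cayleyDist (α x) γ : ℤ) with hw
  have hws : w s = 0 := by simp [hw, hαs, hone, hlen, cayleyLength_one]
  have hwt : w t = 2 * (n - 1 : ℕ) := by
    simp only [hw, hαt, hone, hlen, cayleyDist_self]; push_cast; ring
  have hlip : ∀ x y, |w x - w y| ≤ 2 * (cayleyDist (α x) (α y) : ℤ) := by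
    intro x y
    have h1 := cayleyDist_triangle 1 (α x) (α y)
    have h2 := cayleyDist_triangle 1 (α y) (α x)
    have h3 := cayleyDist_triangle (α x) (α y) γ
    have h4 := cayleyDist_triangle (α y) (α x) γ
    rw [cayleyDist_comm (α y) (α x)] at h2 h4
    simp only [hw]
    rw [abs_le]
    omega
  set I : Finset ℤ := Finset.Ico 0 (2 * (n - 1 : ℕ)) with hI
  have hIcard : (I.card : ℤ) = 2 * (n - 1 : ℕ) := by simp [hI]
  -- The edgewise slack between `2 (n - 1) d(α x, α y)` and the total contribution of the cuts.
  set D : Sym2 V → ℤ := fun e =>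
    2 * (n - 1 : ℕ) * (edgeTerm α e : ℤ) - ∑ k ∈ I, (edgeTerm (cutLabel γ w k) e : ℤ) with hD
  have hDnn : ∀ e, 0 ≤ D e := by
    intro e
    induction e with
    | _ x y =>
      have h1 := sum_cayleyDist_cutLabel_le γ w I x y
      have h2 := mul_le_mul_of_nonneg_left (hlip x y) (Int.natCast_nonneg (n - 1))
      rw [hlen] at h1
      simp only [hD, edgeTerm, Sym2.lift_mk]
      linarith
  have hDsum : ∑ e ∈ G.edgeSet.toFinite.toFinset, D e ≤ 0 := by
    have h1 : ∑ k ∈ I, (hamiltonian G α : ℤ) ≤ ∑ k ∈ I, (hamiltonian G (cutLabel γ w k) : ℤ) := by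
      refine Finset.sum_le_sum fun k hk => ?_
      rw [hI, Finset.mem_Ico] at hk
      exact_mod_cast hmin _ (if_pos (by omega)) (if_neg (by omega))
    rw [Finset.sum_const, nsmul_eq_mul, hIcard] at h1
    simp only [hamiltonian_eq_sum, Nat.cast_sum] at h1
    rw [Finset.sum_comm, Finset.mul_sum] at h1
    simp only [hD, Finset.sum_sub_distrib]
    linarith
  have hDzero : ∀ e ∈ G.edgeSet, D e = 0 := by
    have h0 := le_antisymm hDsum (Finset.sum_nonneg fun e _ => hDnn e)
    intro e he
    exact (Finset.sum_eq_zero_iff_of_nonneg fun e _ => hDnn e).1 h0 e (by simpa using he)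
  have hadj : ∀ x y, G.Adj x y → cayleyDist 1 (α x) + cayleyDist (α x) γ =
      cayleyDist 1 (α y) + cayleyDist (α y) γ := by
    intro x y hxy
    have h0 := hDzero s(x, y) hxy
    have h1 := sum_cayleyDist_cutLabel_le γ w I x y
    rw [hlen] at h1
    simp only [hD, edgeTerm, Sym2.lift_mk] at h0
    have h2 : 2 * (cayleyDist (α x) (α y) : ℤ) ≤ |w x - w y| := by
      have hpos : (0 : ℤ) < (n - 1 : ℕ) := by omega
      refine le_of_mul_le_mul_left ?_ hpos
      linarith
    have h3 := cayleyDist_triangle 1 (α x) (α y)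
    have h4 := cayleyDist_triangle 1 (α y) (α x)
    have h5 := cayleyDist_triangle (α x) (α y) γ
    have h6 := cayleyDist_triangle (α y) (α x) γ
    rw [cayleyDist_comm (α y) (α x)] at h4 h6
    simp only [hw, le_abs] at h2
    omega
  intro x
  have hreach : ∀ y, G.Reachable s y →
      cayleyDist 1 (α y) + cayleyDist (α y) γ = n - 1 := by
    rintro y ⟨p⟩
    have : ∀ a b, G.Walk a b → cayleyDist 1 (α a) + cayleyDist (α a) γ =
        cayleyDist 1 (α b) + cayleyDist (α b) γ := by
      intro a b p
      induction p with
      | nil => rfl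
      | cons h _ ih => exact (hadj _ _ h).trans ih
    rw [← this _ _ p, hαs, cayleyDist_self, hone, hlen, zero_add]
  have := hreach x (hconn.preconnected s x)
  rwa [hone] at this
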